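/- arXiv:2509.08387 — 3 statements merged into one kernel-verified Lean document; each statement's English description precedes it below -/
import Mathlib

section
/- Let a budget profile be given (integer m ≥ 1, strictly increasing positive real privacy budgets ε_1 < ε_2 < ⋯ < ε_m, positive integer counts n_1, …, n_m, n = n_1 + ⋯ + n_m, Z = (n − n_m)(n − n_m + 1/4)) and a sensitivity I > 0. Then the OBS error satisfies errO_I ≤ min( 2I²/ε_1² , Z + 2I²/ε_m² ). (Lemma 1: the error of the Sampling Mechanism with privacy budget chosen by Optimal Budget Selection is at most min(2I²/min_j ε_j², (n − n_M)(n − n_M + 1/4) + 2I²/max_j ε_j²), where n_M is the count of the largest budget.) -/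
open Finset

/-- Sampling probability p_k(θ) = (e^{ε_k} − 1)/(e^{θ} − 1). -/
noncomputable def samplingP {m : ℕ} (ε : Fin m → ℝ) (k : Fin m) (θ : ℝ) : ℝ :=
  (Real.exp (ε k) - 1) / (Real.exp θ - 1)

/-- Sampling error err_s(θ). -/
noncomputable def errS {m : ℕ} (ε : Fin m → ℝ) (nn : Fin m → ℕ) (θ : ℝ) : ℝ :=
  (∑ k, if ε k < θ then (nn k : ℝ) * samplingP ε k θ * (1 - samplingP ε k θ) else 0)
    + (∑ k, if ε k < θ then (nn k : ℝ) * (1 - samplingP ε k θ) else 0) ^ 2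

/-- Noise error err_dp(θ) = 2I²/θ². -/
noncomputable def errDP (I θ : ℝ) : ℝ := 2 * I ^ 2 / θ ^ 2

/-- Total error err(θ) = err_s(θ) + err_dp(θ). -/
noncomputable def errTot {m : ℕ} (ε : Fin m → ℝ) (nn : Fin m → ℕ) (I θ : ℝ) : ℝ :=
  errS ε nn θ + errDP I θ

/-- OBS error: errO_I = min_{1 ≤ j ≤ m} err(ε_j). -/
noncomputable def errO {m : ℕ} (hm : 0 < m) (ε : Fin m → ℝ) (nn : Fin m → ℕ) (I : ℝ) : ℝ :=
  Finset.univ.inf' (Finset.univ_nonempty_iff.mpr (Fin.pos_iff_nonempty.mp hm))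
    (fun j => errTot ε nn I (ε j))

/-- Index of the smallest budget ε_1. -/
def firstIdx {m : ℕ} (hm : 0 < m) : Fin m := ⟨0, hm⟩

/-- Index of the largest budget ε_m. -/
def lastIdx {m : ℕ} (hm : 0 < m) : Fin m := ⟨m - 1, Nat.sub_lt hm Nat.one_pos⟩

/-- Z = (n − n_m)(n − n_m + 1/4). -/
noncomputable def Zval {m : ℕ} (hm : 0 < m) (nn : Fin m → ℕ) : ℝ :=
  ((∑ j, (nn j : ℝ)) - nn (lastIdx hm)) * ((∑ j, (nn j : ℝ)) - nn (lastIdx hm) + 1 / 4)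

/-- N-th square harmonic number H²_N = Σ_{k=1}^N 1/k². -/
noncomputable def sqHarmonic (N : ℕ) : ℝ := ∑ k ∈ Finset.Icc 1 N, 1 / (k : ℝ) ^ 2

/-!
The sampling error is a variance plus a squared bias. With `W` the number of records whose budget
lies below the threshold, the variance `∑ n_k p_k (1 - p_k)` is at most `W / 4`, because
`p (1 - p) ≤ 1 / 4`, and the bias `∑ n_k (1 - p_k)` lies in `[0, W]`. Hence the sampling error is at
most `W ^ 2 + W / 4 = W (W + 1 / 4)`. The smallest budget leaves nothing below the threshold, and
any budget `ε_j` leaves at most `n - n_j` records below it.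
-/

section WeightedSums

variable {ι R : Type*} {s : Finset ι} {w p : ι → R}

lemma sum_filter_lt_self_le_sum_sub {α : Type*} [AddCommGroup R] [PartialOrder R]
    [IsOrderedAddMonoid R] [Fintype ι] [Preorder α] [DecidableLT α]
    (f : ι → α) (hw : ∀ k, 0 ≤ w k) (j : ι) :
    ∑ k with f k < f j, w k ≤ ∑ k, w k - w j := by
  classical
  rw [← sum_erase_eq_sub (mem_univ j)]
  refine sum_le_sum_of_subset_of_nonneg (fun k hk => ?_) fun k _ _ => hw k
  exact mem_erase.mpr ⟨fun h => (mem_filter.mp hk).2.ne (congrArg f h), mem_univ k⟩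

lemma sq_sum_mul_one_sub_le [Ring R] [PartialOrder R] [IsOrderedRing R]
    (hw : ∀ k ∈ s, 0 ≤ w k) (hp : ∀ k ∈ s, p k ∈ Set.Icc 0 1) :
    (∑ k ∈ s, w k * (1 - p k)) ^ 2 ≤ (∑ k ∈ s, w k) ^ 2 := by
  have hnonneg : 0 ≤ ∑ k ∈ s, w k * (1 - p k) :=
    sum_nonneg fun k hk => mul_nonneg (hw k hk) (sub_nonneg.mpr (hp k hk).2)
  have hle : ∑ k ∈ s, w k * (1 - p k) ≤ ∑ k ∈ s, w k :=
    sum_le_sum fun k hk => mul_le_of_le_one_right (hw k hk) (sub_le_self _ (hp k hk).1)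
  exact pow_le_pow_left₀ hnonneg hle 2

variable [Field R] [LinearOrder R] [IsStrictOrderedRing R]

lemma mul_one_sub_le_one_div_four (x : R) : x * (1 - x) ≤ 1 / 4 := by
  linarith [four_mul_le_sq_add x (1 - x)]

lemma sum_mul_mul_one_sub_le (hw : ∀ k ∈ s, 0 ≤ w k) :
    ∑ k ∈ s, w k * p k * (1 - p k) ≤ (∑ k ∈ s, w k) * (1 / 4) := by
  rw [sum_mul]
  refine sum_le_sum fun k hk => ?_
  rw [mul_assoc]
  exact mul_le_mul_of_nonneg_left (mul_one_sub_le_one_div_four _) (hw k hk)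

end WeightedSums

section BudgetProfile

variable {m : ℕ} {ε : Fin m → ℝ} {θ : ℝ}

lemma samplingP_mem_Icc {k : Fin m} (hk : 0 ≤ ε k) (hkθ : ε k ≤ θ) :
    samplingP ε k θ ∈ Set.Icc 0 1 := by
  have hnum : 0 ≤ Real.exp (ε k) - 1 := sub_nonneg.mpr (Real.one_le_exp hk)
  have hle : Real.exp (ε k) - 1 ≤ Real.exp θ - 1 := sub_le_sub_right (Real.exp_le_exp.mpr hkθ) 1
  exact ⟨div_nonneg hnum (hnum.trans hle), div_le_one_of_le₀ hle (hnum.trans hle)⟩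

variable (nn : Fin m → ℕ)

lemma errS_eq_zero_of_forall_le (hθ : ∀ k, θ ≤ ε k) : errS ε nn θ = 0 := by
  simp [errS, (hθ _).not_gt]

lemma errS_le_sum_filter_lt (hε : ∀ k, 0 ≤ ε k) :
    errS ε nn θ ≤
      (∑ k with ε k < θ, (nn k : ℝ)) * (∑ k with ε k < θ, (nn k : ℝ) + 1 / 4) := by
  have hnn : ∀ k ∈ univ.filter (ε · < θ), (0 : ℝ) ≤ nn k := fun k _ => Nat.cast_nonneg _
  have hp : ∀ k ∈ univ.filter (ε · < θ), samplingP ε k θ ∈ Set.Icc 0 1 := fun k hk =>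
    samplingP_mem_Icc (hε k) (mem_filter.mp hk).2.le
  rw [errS, ← sum_filter, ← sum_filter]
  linarith [sum_mul_mul_one_sub_le (p := (samplingP ε · θ)) hnn, sq_sum_mul_one_sub_le hnn hp]

lemma errS_budget_le (hε : ∀ k, 0 ≤ ε k) (j : Fin m) :
    errS ε nn (ε j) ≤ (∑ k, (nn k : ℝ) - nn j) * (∑ k, (nn k : ℝ) - nn j + 1 / 4) := by
  have hbelow : ∑ k with ε k < ε j, (nn k : ℝ) ≤ ∑ k, (nn k : ℝ) - nn j :=
    sum_filter_lt_self_le_sum_sub ε (fun k => Nat.cast_nonneg _) j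
  refine (errS_le_sum_filter_lt nn hε).trans ?_
  gcongr
  exact (sum_nonneg fun k _ => Nat.cast_nonneg _).trans hbelow

lemma errO_le_errTot (hm : 0 < m) (I : ℝ) (j : Fin m) : errO hm ε nn I ≤ errTot ε nn I (ε j) :=
  inf'_le _ (mem_univ j)

theorem obs_error_bound_general (hm : 0 < m) (hpos : ∀ k, 0 < ε k) {i : Fin m}
    (hi : ∀ k, ε i ≤ ε k) (j : Fin m) (I : ℝ) :
    errO hm ε nn I ≤
      min (2 * I ^ 2 / ε i ^ 2)
        ((∑ k, (nn k : ℝ) - nn j) * (∑ k, (nn k : ℝ) - nn j + 1 / 4) + 2 * I ^ 2 / ε j ^ 2) := by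
  refine le_min ?_ ?_
  · calc errO hm ε nn I ≤ errS ε nn (ε i) + errDP I (ε i) := errO_le_errTot nn hm I i
      _ = 2 * I ^ 2 / ε i ^ 2 := by rw [errS_eq_zero_of_forall_le nn hi, zero_add, errDP]
  · calc errO hm ε nn I ≤ errS ε nn (ε j) + errDP I (ε j) := errO_le_errTot nn hm I j
      _ ≤ _ := add_le_add_left (errS_budget_le nn (fun k => (hpos k).le) j) _

end BudgetProfile

/-- Lemma 1: the OBS error with sensitivity I is at most
min(2I²/ε_1², Z + 2I²/ε_m²). -/
theorem obs_error_bound (m : ℕ) (hm : 0 < m) (ε : Fin m → ℝ) (nn : Fin m → ℕ)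
    (hpos : ∀ j, 0 < ε j) (hmono : StrictMono ε) (hcount : ∀ j, 0 < nn j)
    (I : ℝ) (hI : 0 < I) :
    errO hm ε nn I ≤
      min (2 * I ^ 2 / (ε (firstIdx hm)) ^ 2)
        (Zval hm nn + 2 * I ^ 2 / (ε (lastIdx hm)) ^ 2) :=
  obs_error_bound_general nn hm hpos
    (fun k => hmono.monotone (Fin.mk_le_of_le_val k.val.zero_le)) (lastIdx hm) I
end

section
/- Let a budget profile be given (integer m ≥ 1, strictly increasing positive real privacy budgets ε_1 < ε_2 < ⋯ < ε_m, positive integer counts n_1, …, n_m, n = n_1 + ⋯ + n_m, Z = (n − n_m)(n − n_m + 1/4)) and a sensitivity I > 0. Then for every real β > 0, the OBS error of the β-scaled profile satisfies errO_I(β) ≤ min( 2I²/(βε_1)² , Z + 2I²/(βε_m)² ). -/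
open Finset

/-!
Each user below the threshold `θ` contributes variance `p (1 - p) ≤ 1/4` and bias `1 - p ≤ 1`,
so the sampling error is at most `N (N + 1/4)`, with `N` the number of users whose budget is below
`θ`. At the smallest budget `N = 0`. At any budget `ε_l` the `n_l` users holding it are not counted,
so `N ≤ n - n_l`.
-/

/-- The number of users whose budget lies strictly below the threshold `θ`. -/
noncomputable def countBelow {m : ℕ} (ε : Fin m → ℝ) (nn : Fin m → ℕ) (θ : ℝ) : ℕ :=
  ∑ k with ε k < θ, nn k

lemma mul_one_sub_le_one_fourth (p : ℝ) : p * (1 - p) ≤ 1 / 4 := by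
  linarith [four_mul_le_sq_add p (1 - p)]

section SamplingProbability

variable {m : ℕ} {ε : Fin m → ℝ} {k : Fin m} {θ : ℝ}

lemma samplingP_nonneg (hk : 0 ≤ ε k) (hθ : 0 ≤ θ) : 0 ≤ samplingP ε k θ :=
  div_nonneg (sub_nonneg.mpr (Real.one_le_exp hk)) (sub_nonneg.mpr (Real.one_le_exp hθ))

lemma samplingP_le_one (hθ : 0 ≤ θ) (hkθ : ε k ≤ θ) : samplingP ε k θ ≤ 1 :=
  div_le_one_of_le₀ (sub_le_sub_right (Real.exp_le_exp.mpr hkθ) 1)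
    (sub_nonneg.mpr (Real.one_le_exp hθ))

end SamplingProbability

section SamplingError

variable {m : ℕ} (ε : Fin m → ℝ) (nn : Fin m → ℕ) (θ : ℝ)

lemma errS_eq_sum_filter :
    errS ε nn θ = ∑ k with ε k < θ, (nn k : ℝ) * samplingP ε k θ * (1 - samplingP ε k θ)
      + (∑ k with ε k < θ, (nn k : ℝ) * (1 - samplingP ε k θ)) ^ 2 := by
  simp only [errS, sum_filter]

lemma sum_variance_le_countBelow_mul_one_fourth :
    ∑ k with ε k < θ, (nn k : ℝ) * samplingP ε k θ * (1 - samplingP ε k θ)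
      ≤ countBelow ε nn θ * (1 / 4) := by
  rw [countBelow, Nat.cast_sum, sum_mul]
  refine sum_le_sum fun k _ => ?_
  rw [mul_assoc]
  exact mul_le_mul_of_nonneg_left (mul_one_sub_le_one_fourth _) (Nat.cast_nonneg _)

variable {ε}

lemma sum_bias_nonneg (hε : ∀ k, 0 ≤ ε k) :
    0 ≤ ∑ k with ε k < θ, (nn k : ℝ) * (1 - samplingP ε k θ) := by
  refine sum_nonneg fun k hk => ?_
  have hkθ : ε k ≤ θ := (mem_filter.mp hk).2.le
  exact mul_nonneg (Nat.cast_nonneg _)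
    (sub_nonneg.mpr (samplingP_le_one ((hε k).trans hkθ) hkθ))

lemma sum_bias_le_countBelow (hε : ∀ k, 0 ≤ ε k) :
    ∑ k with ε k < θ, (nn k : ℝ) * (1 - samplingP ε k θ) ≤ countBelow ε nn θ := by
  rw [countBelow, Nat.cast_sum]
  refine sum_le_sum fun k hk => ?_
  have hθ : 0 ≤ θ := (hε k).trans (mem_filter.mp hk).2.le
  exact mul_le_of_le_one_right (Nat.cast_nonneg _)
    (sub_le_self 1 (samplingP_nonneg (hε k) hθ))

lemma errS_le_countBelow (hε : ∀ k, 0 ≤ ε k) :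
    errS ε nn θ ≤ countBelow ε nn θ * (countBelow ε nn θ + 1 / 4) := by
  have hbias := pow_le_pow_left₀ (sum_bias_nonneg nn θ hε) (sum_bias_le_countBelow nn θ hε) 2
  calc errS ε nn θ
      ≤ countBelow ε nn θ * (1 / 4) + (countBelow ε nn θ : ℝ) ^ 2 :=
        (errS_eq_sum_filter ε nn θ).trans_le
          (add_le_add (sum_variance_le_countBelow_mul_one_fourth ε nn θ) hbias)
    _ = countBelow ε nn θ * (countBelow ε nn θ + 1 / 4) := by ring

end SamplingError

section BudgetThreshold

variable {m : ℕ} {ε : Fin m → ℝ} (nn : Fin m → ℕ)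

lemma countBelow_eq_zero {θ : ℝ} (hθ : ∀ k, θ ≤ ε k) : countBelow ε nn θ = 0 := by
  simp [countBelow, (hθ _).not_gt]

variable (ε) in
lemma countBelow_budget_le_sub (l : Fin m) :
    (countBelow ε nn (ε l) : ℝ) ≤ (∑ k, (nn k : ℝ)) - nn l := by
  have hl : l ∉ ({k | ε k < ε l} : Finset (Fin m)) := by simp
  have hbelow : nn l + countBelow ε nn (ε l) ≤ ∑ k, nn k := by
    rw [countBelow, ← sum_insert hl]
    exact sum_le_sum_of_subset (subset_univ _)
  rw [le_sub_iff_add_le']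
  exact_mod_cast hbelow

variable (I : ℝ)

lemma errO_le_countBelow (hm : 0 < m) (hε : ∀ k, 0 < ε k) (j : Fin m) :
    errO hm ε nn I ≤ countBelow ε nn (ε j) * (countBelow ε nn (ε j) + 1 / 4)
      + 2 * I ^ 2 / ε j ^ 2 :=
  (inf'_le _ (mem_univ j)).trans
    (add_le_add_left (errS_le_countBelow nn (ε j) fun k => (hε k).le) _)

theorem obs_error_bound_scaled_general (hm : 0 < m) (hε : ∀ k, 0 < ε k)
    {i : Fin m} (hi : ∀ k, ε i ≤ ε k) (l : Fin m) :
    errO hm ε nn I ≤ min (2 * I ^ 2 / ε i ^ 2)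
      (((∑ k, (nn k : ℝ)) - nn l) * ((∑ k, (nn k : ℝ)) - nn l + 1 / 4)
        + 2 * I ^ 2 / ε l ^ 2) := by
  refine le_min ?_ ?_
  · simpa [countBelow_eq_zero nn hi] using errO_le_countBelow nn I hm hε i
  · have hbelow := countBelow_budget_le_sub ε nn l
    refine (errO_le_countBelow nn I hm hε l).trans ?_
    gcongr
    exact (Nat.cast_nonneg _).trans hbelow

end BudgetThreshold

/-- For every β > 0, the OBS error of the β-scaled profile is at most
min(2I²/(βε_1)², Z + 2I²/(βε_m)²). -/
theorem obs_error_bound_scaled (m : ℕ) (hm : 0 < m) (ε : Fin m → ℝ) (nn : Fin m → ℕ)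
    (hpos : ∀ j, 0 < ε j) (hmono : StrictMono ε) (hcount : ∀ j, 0 < nn j)
    (I : ℝ) (hI : 0 < I) :
    ∀ β : ℝ, 0 < β →
      errO hm (fun j => β * ε j) nn I ≤
        min (2 * I ^ 2 / (β * ε (firstIdx hm)) ^ 2)
          (Zval hm nn + 2 * I ^ 2 / (β * ε (lastIdx hm)) ^ 2) := by
  have hfirst (k : Fin m) : ε (firstIdx hm) ≤ ε k := hmono.monotone (Nat.zero_le k)
  exact fun β hβ => obs_error_bound_scaled_general nn I hm (fun k => mul_pos hβ (hpos k))
    (fun k => mul_le_mul_of_nonneg_left (hfirst k) hβ.le) (lastIdx hm)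
end

section
/- Let ε > 0 be a real number, w ≥ 1 an integer, and (a_t)_{t ≥ 1} a sequence of nonnegative reals such that for every t ≥ 1, a_t ≤ (ε/2 − Σ_{k = max(t−w+1, 1)}^{t−1} a_k)/2. Define the total per-slot budget usage c_t = ε/(2w) + a_t for every t ≥ 1. Then for every t ≥ 1, Σ_{k = max(t−w+1, 1)}^{t} c_k ≤ ε. (Budget feasibility in Theorem 1 for Personalized Budget Distribution: the dissimilarity-calculation part uses a constant budget ε/(2w) per slot, the publication part uses at most half of its remaining window budget per slot, and together the total budget spent in any window of length w is at most ε.) -/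
/-!
Each half of the budget `ε` is respected separately within a window. A window has at most `w` slots,
so a constant `ε / (2w)` per slot costs at most `ε / 2`. For the publication part, only the last
slot `t` of the window matters: what it spends is nonnegative and at most half of what the other
slots left over, so that remainder is nonnegative and is not exceeded.
-/

section Budget

variable {ι K : Type*} [Field K] [LinearOrder K] [IsStrictOrderedRing K]

theorem sum_le_of_le_half_sub_sum_erase [DecidableEq ι] {s : Finset ι} {i : ι} {f : ι → K} {b : K}
    (hi : i ∈ s) (hnonneg : 0 ≤ f i) (hhalf : f i ≤ (b - ∑ j ∈ s.erase i, f j) / 2) :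
    ∑ j ∈ s, f j ≤ b := by
  have hremaining : 0 ≤ b - ∑ j ∈ s.erase i, f j := by linarith
  calc ∑ j ∈ s, f j
      = f i + ∑ j ∈ s.erase i, f j := (Finset.add_sum_erase s f hi).symm
    _ ≤ b := le_sub_iff_add_le.mp (hhalf.trans (half_le_self hremaining))

theorem sum_const_div_le_of_card_le {s : Finset ι} {n : ℕ} {b : K} (hb : 0 ≤ b)
    (hs : s.card ≤ n) : ∑ _i ∈ s, b / n ≤ b := by
  calc ∑ _i ∈ s, b / n
      = b * (s.card / n) := by rw [Finset.sum_const, nsmul_eq_mul, mul_div_left_comm]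
    _ ≤ b := mul_le_of_le_one_right hb
        (div_le_one_of_le₀ (Nat.cast_le.mpr hs) n.cast_nonneg)

end Budget

/-- The window of the last `w` time slots up to and including slot `t`, over which the budget is
constrained. Slots are numbered from `1`; for `t < w` the subtraction truncates and the window
starts at slot `1`. -/
def slidingWindow (w t : ℕ) : Finset ℕ :=
  Finset.Icc (max (t - w + 1) 1) t

theorem one_le_of_mem_slidingWindow {w t k : ℕ} (hk : k ∈ slidingWindow w t) : 1 ≤ k :=
  (le_max_right _ _).trans (Finset.mem_Icc.mp hk).1

theorem self_mem_slidingWindow {w t : ℕ} (hw : 1 ≤ w) (ht : 1 ≤ t) : t ∈ slidingWindow w t :=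
  Finset.mem_Icc.mpr ⟨by omega, le_rfl⟩

theorem card_slidingWindow (w t : ℕ) : (slidingWindow w t).card = min w t := by
  rw [slidingWindow, Nat.card_Icc]
  omega

theorem slidingWindow_erase_self (w t : ℕ) :
    (slidingWindow w t).erase t = Finset.Icc (max (t - w + 1) 1) (t - 1) := by
  ext k
  simp only [slidingWindow, Finset.mem_erase, Finset.mem_Icc]
  omega

/-- Budget feasibility for Personalized Budget Distribution: with the constant
dissimilarity-calculation budget ε/(2w) per slot added to the publication budgets,
the total budget spent in any window of length w is at most ε. -/
theorem pbd_total_budget_feasibility (ε : ℝ) (hε : 0 < ε) (w : ℕ) (hw : 1 ≤ w) (a : ℕ → ℝ)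
    (ha0 : ∀ t, 1 ≤ t → 0 ≤ a t)
    (ha : ∀ t, 1 ≤ t →
      a t ≤ (ε / 2 - ∑ k ∈ Finset.Icc (max (t - w + 1) 1) (t - 1), a k) / 2)
    (c : ℕ → ℝ) (hc : ∀ t, 1 ≤ t → c t = ε / (2 * (w : ℝ)) + a t) :
    ∀ t, 1 ≤ t → ∑ k ∈ Finset.Icc (max (t - w + 1) 1) t, c k ≤ ε := by
  intro t ht
  have hpublication : ∑ k ∈ slidingWindow w t, a k ≤ ε / 2 := by
    refine sum_le_of_le_half_sub_sum_erase (self_mem_slidingWindow hw ht) (ha0 t ht) ?_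
    rw [slidingWindow_erase_self]
    exact ha t ht
  have hdissimilarity : ∑ _k ∈ slidingWindow w t, ε / 2 / w ≤ ε / 2 :=
    sum_const_div_le_of_card_le (half_pos hε).le
      ((card_slidingWindow w t).trans_le (min_le_left w t))
  calc ∑ k ∈ slidingWindow w t, c k
      = ∑ k ∈ slidingWindow w t, (ε / 2 / w + a k) :=
        Finset.sum_congr rfl fun k hk => by
          rw [hc k (one_le_of_mem_slidingWindow hk), div_mul_eq_div_div]
    _ = ∑ _k ∈ slidingWindow w t, ε / 2 / w + ∑ k ∈ slidingWindow w t, a k :=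
        Finset.sum_add_distrib
    _ ≤ ε / 2 + ε / 2 := add_le_add hdissimilarity hpublication
    _ = ε := add_halves ε
end
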